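/- Let W : ℝ → ℝ be locally integrable and let c, θ ∈ ℝ. Suppose that for each E ∈ ℝ, (u(·,E), v(·,E)) is a solution of −u″ + (W − E)·u = 0 (i.e., of −u″ + W·u = E·u) with u(c,E) = sin θ and v(c,E) = cos θ, and that R : ℝ×ℝ → (0,∞) and φ : ℝ×ℝ → ℝ satisfy u(x,E) = R(x,E)·sin(φ(x,E)), v(x,E) = R(x,E)·cos(φ(x,E)) and φ(c,E) = θ for all x, E, with φ jointly continuous. Then for every fixed x ∈ ℝ, the function E ↦ φ(x,E) is differentiable on ℝ with derivative ∂φ/∂E(x,E) = R(x,E)^{−2}·∫_c^x u(t,E)² dt. -/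

import Mathlib

open MeasureTheory

theorem loc_ii {f : ℝ → ℝ} (hf : LocallyIntegrable f volume) (a b : ℝ) :
    IntervalIntegrable f volume a b :=
  intervalIntegrable_iff.mpr <|
    (hf.integrableOn_isCompact isCompact_uIcc).mono_set Set.uIoc_subset_uIcc

theorem acoi_comp {f h : ℝ → ℝ} {a b : ℝ} {K : NNReal} (hf : AbsolutelyContinuousOnInterval f a b)
    (hh : LipschitzOnWith K h (f '' Set.uIcc a b)) :
    AbsolutelyContinuousOnInterval (fun x => h (f x)) a b := by
  rw [absolutelyContinuousOnInterval_iff] at hf ⊢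
  intro ε hε
  obtain ⟨δ, hδ, H⟩ := hf (ε / (K + 1)) (by positivity)
  refine ⟨δ, hδ, fun E hE hlt => ?_⟩
  have h1 := H E hE hlt
  calc _ ≤ ∑ i ∈ Finset.range E.1, (K : ℝ) * dist (f (E.2 i).1) (f (E.2 i).2) := by
        refine Finset.sum_le_sum fun i hi => ?_
        have := hE.1 i hi
        exact hh.dist_le_mul _ ⟨_, this.1, rfl⟩ _ ⟨_, this.2, rfl⟩
    _ = K * ∑ i ∈ Finset.range E.1, dist (f (E.2 i).1) (f (E.2 i).2) := by
        rw [Finset.mul_sum]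
    _ ≤ (K + 1) * ∑ i ∈ Finset.range E.1, dist (f (E.2 i).1) (f (E.2 i).2) := by
        gcongr
        linarith
    _ < (K + 1) * (ε / (K + 1)) := by gcongr
    _ = ε := by field_simp

theorem acoi_log {f : ℝ → ℝ} {a b : ℝ} (hf : AbsolutelyContinuousOnInterval f a b)
    (hpos : ∀ x, 0 < f x) :
    AbsolutelyContinuousOnInterval (fun x => Real.log (f x)) a b := by
  have hcpt : IsCompact (f '' Set.uIcc a b) := isCompact_uIcc.image_of_continuousOn hf.continuousOn
  have hconv : Convex ℝ (f '' Set.uIcc a b) :=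
    (isPreconnected_uIcc.image f hf.continuousOn).ordConnected.convex
  have hc : ContDiffOn ℝ 1 Real.log (f '' Set.uIcc a b) := by
    rintro y ⟨x, -, rfl⟩
    exact (Real.contDiffAt_log.2 (hpos x).ne').contDiffWithinAt
  obtain ⟨K, hK⟩ := hc.exists_lipschitzOnWith (by decide) hconv hcpt
  exact acoi_comp hf hK

theorem acoi_ftc {f f' : ℝ → ℝ} {a b : ℝ} (hf : AbsolutelyContinuousOnInterval f a b)
    (hd : ∀ᵐ x, HasDerivAt f (f' x) x) : ∫ x in a..b, f' x = f b - f a := by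
  rw [← hf.integral_deriv_eq_sub]
  apply intervalIntegral.integral_congr_ae
  filter_upwards [hd] with x hx _
  exact hx.deriv.symm

/-- Derivative of the Prüfer phase with respect to the energy `E`:
`∂φ/∂E(x,E) = R(x,E)⁻² ∫_c^x u(·,E)²`. -/
theorem prufer_phase_deriv_energy (W : ℝ → ℝ) (c θ : ℝ)
    (hW : LocallyIntegrable W volume)
    (u v R φ : ℝ → ℝ → ℝ)
    (hu : ∀ (E : ℝ) (x : ℝ), HasDerivAt (fun s => u s E) (v x E) x)
    (hv : ∀ (E : ℝ) (x y : ℝ),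
      v x E = v y E + ∫ t in y..x, (W t - E) * u t E)
    (hu0 : ∀ E : ℝ, u c E = Real.sin θ)
    (hv0 : ∀ E : ℝ, v c E = Real.cos θ)
    (hR : ∀ x E : ℝ, 0 < R x E)
    (huR : ∀ x E : ℝ, u x E = R x E * Real.sin (φ x E))
    (hvR : ∀ x E : ℝ, v x E = R x E * Real.cos (φ x E))
    (hφ0 : ∀ E : ℝ, φ c E = θ)
    (hφcont : Continuous fun p : ℝ × ℝ => φ p.1 p.2) :
    ∀ x E : ℝ,
      HasDerivAt (fun e => φ x e)
        ((R x E ^ 2)⁻¹ * ∫ t in c..x, u t E ^ 2) E := by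
  have hWi : ∀ a b, IntervalIntegrable W volume a b := fun a b => loc_ii hW a b
  have ucont : ∀ E, Continuous fun s => u s E := fun E =>
    continuous_iff_continuousAt.2 fun x => (hu E x).continuousAt
  have hqloc : ∀ E, LocallyIntegrable (fun t => (W t - E) * u t E) volume := by
    intro E
    have h1 : LocallyIntegrable (fun t => W t - E) volume :=
      hW.sub continuous_const.locallyIntegrable
    rw [← locallyIntegrableOn_univ] at h1 ⊢
    exact h1.mul_continuousOn (ucont E).continuousOn isOpen_univ.isLocallyClosed
  have hqi : ∀ E a b, IntervalIntegrable (fun t => (W t - E) * u t E) volume a b :=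
    fun E a b => loc_ii (hqloc E) a b
  have hvac : ∀ E a b, AbsolutelyContinuousOnInterval (fun s => v s E) a b := by
    intro E a b
    have h1 := (hqi E a b).absolutelyContinuousOnInterval_intervalIntegral
      (c := a) Set.left_mem_uIcc
    have h2 : AbsolutelyContinuousOnInterval (fun _ : ℝ => v a E) a b :=
      (contDiff_const (n := 1)).contDiffOn.absolutelyContinuousOnInterval
    have h3 := h2.add h1
    have h4 : (fun s => v s E) = (fun _ : ℝ => v a E) +
        fun x => ∫ t in a..x, (W t - E) * u t E := by
      funext s
      simp only [Pi.add_apply]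
      exact hv E s a
    rw [h4]; exact h3
  have vcont : ∀ E, Continuous fun s => v s E := by
    intro E
    have h4 : (fun s => v s E) = fun s => v c E + ∫ t in c..s, (W t - E) * u t E := by
      funext s
      exact hv E s c
    rw [h4]
    exact continuous_const.add (intervalIntegral.continuous_primitive (hqi E) c)
  have huac : ∀ E a b, AbsolutelyContinuousOnInterval (fun s => u s E) a b := by
    intro E a b
    have hcd : ContDiff ℝ 1 fun s => u s E := by
      rw [contDiff_one_iff_deriv]
      refine ⟨fun x => (hu E x).differentiableAt, ?_⟩
      have : deriv (fun s => u s E) = fun s => v s E := funext fun x => (hu E x).deriv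
      rw [this]; exact vcont E
    exact hcd.contDiffOn.absolutelyContinuousOnInterval
  have hvd : ∀ E, ∀ᵐ x, HasDerivAt (fun s => v s E) ((W x - E) * u x E) x := by
    intro E
    filter_upwards [LocallyIntegrable.ae_hasDerivAt_integral (hqloc E)] with x hx
    have h4 : (fun s => v s E) = fun s => v c E + ∫ t in c..s, (W t - E) * u t E := by
      funext s
      exact hv E s c
    rw [h4]
    exact (hx c).const_add _
  have hG : ∀ x E, u x E ^ 2 + v x E ^ 2 = R x E ^ 2 := by
    intro x E
    rw [huR, hvR]
    linear_combination R x E ^ 2 * Real.sin_sq_add_cos_sq (φ x E)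
  have hGpos : ∀ x E, 0 < u x E ^ 2 + v x E ^ 2 := by
    intro x E
    rw [hG]; exact pow_pos (hR x E) 2
  -- formula for log R^2
  have hlog : ∀ x E, Real.log (R x E ^ 2) =
      ∫ t in c..x, (1 + W t - E) * (2 * (Real.sin (φ t E) * Real.cos (φ t E))) := by
    intro x E
    have hac : AbsolutelyContinuousOnInterval (fun s => u s E * u s E + v s E * v s E) c x :=
      ((huac E c x).fun_mul (huac E c x)).fun_add ((hvac E c x).fun_mul (hvac E c x))
    have hp : ∀ s, 0 < u s E * u s E + v s E * v s E := by
      intro s; have := hGpos s E; nlinarith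
    have h1 := acoi_ftc (f' := fun t => (1 + W t - E) *
      (2 * (Real.sin (φ t E) * Real.cos (φ t E)))) (acoi_log hac hp) (by
        filter_upwards [hvd E] with t ht
        have h2 := (((hu E t).mul (hu E t)).add (ht.mul ht)).log (hp t).ne'
        convert! h2 using 1
        have h3 : u t E * u t E + v t E * v t E = R t E ^ 2 := by
          have := hG t E; nlinarith
        simp only [Pi.add_apply, Pi.mul_apply]
        rw [h3, huR, hvR]
        have := (hR t E).ne'
        field_simp
        ring)
    rw [h1, hu0, hv0]
    have h5 : Real.sin θ * Real.sin θ + Real.cos θ * Real.cos θ = 1 := by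
      have := Real.sin_sq_add_cos_sq θ; nlinarith
    rw [h5, Real.log_one, sub_zero, ← hG]
    ring_nf
  have hexp : ∀ x E, R x E ^ 2 = Real.exp
      (∫ t in c..x, (1 + W t - E) * (2 * (Real.sin (φ t E) * Real.cos (φ t E)))) := by
    intro x E
    rw [← hlog, Real.exp_log (pow_pos (hR x E) 2)]
  have φc1 : ∀ E, Continuous fun s => φ s E := fun E =>
    hφcont.comp (continuous_id.prodMk continuous_const)
  have φc2 : ∀ x, Continuous fun e => φ x e := fun x =>
    hφcont.comp (continuous_const.prodMk continuous_id)
  -- the bound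
  have hB : ∀ E a b, IntervalIntegrable (fun t => 2 * (|W t| + (|E| + 2))) volume a b := by
    intro E a b
    exact ((hWi a b).abs.add intervalIntegrable_const).const_mul 2
  have hbd : ∀ E e, |e - E| ≤ 1 → ∀ t,
      |(1 + W t - e) * (2 * (Real.sin (φ t e) * Real.cos (φ t e)))| ≤
        2 * (|W t| + (|E| + 2)) := by
    intro E e he t
    rw [abs_mul, abs_mul, abs_mul, abs_two]
    have h1 := Real.abs_sin_le_one (φ t e)
    have h2 := Real.abs_cos_le_one (φ t e)
    have h3 : |Real.sin (φ t e)| * |Real.cos (φ t e)| ≤ 1 :=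
      mul_le_one₀ h1 (abs_nonneg _) h2
    have h4 : |1 + W t - e| ≤ |W t| + (|E| + 2) := by
      have := neg_abs_le (W t)
      have := le_abs_self (W t)
      have := neg_abs_le E
      have := le_abs_self E
      rw [abs_le] at he ⊢
      constructor <;> linarith
    have h5 := abs_nonneg (1 + W t - e)
    nlinarith
  have hnear : ∀ E : ℝ, ∀ᶠ e in nhds E, |e - E| ≤ 1 := by
    intro E
    filter_upwards [Metric.closedBall_mem_nhds E one_pos] with e he
    simpa [Real.dist_eq] using he
  have hWm : ∀ E a b, AEStronglyMeasurable (fun t => (1 + W t - E)) (volume.restrict (Set.uIoc a b)) := by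
    intro E a b
    have h1 : AEStronglyMeasurable W volume := hW.aestronglyMeasurable
    exact ((aestronglyMeasurable_const.add h1).sub aestronglyMeasurable_const).restrict
  have hRsq : ∀ x E, ContinuousAt (fun e => R x e ^ 2) E := by
    intro x E
    simp_rw [hexp]
    refine Real.continuous_exp.continuousAt.comp ?_
    refine intervalIntegral.continuousAt_of_dominated_interval
      (bound := fun t => 2 * (|W t| + (|E| + 2))) ?_ ?_ (hB E c x) ?_
    · refine Filter.Eventually.of_forall fun e => (hWm e c x).mul ?_
      have := φc1 e
      exact Continuous.aestronglyMeasurable (by fun_prop)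
    · filter_upwards [hnear E] with e he
      exact Filter.Eventually.of_forall fun t _ => hbd E e he t
    · refine Filter.Eventually.of_forall fun t _ => ?_
      have := φc2 t
      exact Continuous.continuousAt (by fun_prop)
  have hRc : ∀ x E, ContinuousAt (fun e => R x e) E := by
    intro x E
    have h1 : (fun e => R x e) = fun e => Real.sqrt (R x e ^ 2) := by
      funext e; rw [Real.sqrt_sq (hR x e).le]
    rw [h1]
    exact (hRsq x E).sqrt
  have hucE : ∀ x E, ContinuousAt (fun e => u x e) E := by
    intro x E
    simp_rw [huR]
    exact (hRc x E).mul (Real.continuous_sin.comp (φc2 x)).continuousAt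
  have hub : ∀ E e, |e - E| ≤ 1 → ∀ t,
      |u t e| ≤ Real.exp |∫ s in c..t, 2 * (|W s| + (|E| + 2))| + 1 := by
    intro E e he t
    have h1 : u t e ^ 2 ≤ R t e ^ 2 := by
      rw [← hG]; nlinarith [sq_nonneg (v t e)]
    have h2 : R t e ^ 2 ≤ Real.exp |∫ s in c..t, 2 * (|W s| + (|E| + 2))| := by
      rw [hexp]
      refine Real.exp_le_exp.2 ((le_abs_self _).trans ?_)
      rw [← Real.norm_eq_abs]
      exact intervalIntegral.norm_integral_le_abs_of_norm_le
        (Filter.Eventually.of_forall fun s => hbd E e he s) (hB E c t)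
    have h3 : |u t e| ≤ u t e ^ 2 + 1 := by
      rw [← sq_abs]; nlinarith [sq_nonneg (|u t e| - 1), abs_nonneg (u t e)]
    linarith
  have hbc : ∀ E, Continuous fun t =>
      Real.exp |∫ s in c..t, 2 * (|W s| + (|E| + 2))| + 1 := by
    intro E
    have := intervalIntegral.continuous_primitive (hB E) c
    fun_prop
  have hint : ∀ x E, ContinuousAt (fun e => ∫ t in c..x, u t e * u t E) E := by
    intro x E
    refine intervalIntegral.continuousAt_of_dominated_interval
      (bound := fun t => (Real.exp |∫ s in c..t, 2 * (|W s| + (|E| + 2))| + 1) * |u t E|)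
      ?_ ?_ ?_ ?_
    · exact Filter.Eventually.of_forall fun e =>
        ((ucont e).mul (ucont E)).aestronglyMeasurable
    · filter_upwards [hnear E] with e he
      refine Filter.Eventually.of_forall fun t _ => ?_
      rw [Real.norm_eq_abs, abs_mul]
      exact mul_le_mul_of_nonneg_right (hub E e he t) (abs_nonneg _)
    · exact ((hbc E).mul (ucont E).abs).intervalIntegrable _ _
    · exact Filter.Eventually.of_forall fun t _ => (hucE t E).mul continuousAt_const
  -- Wronskian
  have hwr : ∀ x e E, u x e * v x E - v x e * u x E =
      (e - E) * ∫ t in c..x, u t e * u t E := by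
    intro x e E
    have hac : AbsolutelyContinuousOnInterval
        (fun s => u s e * v s E - v s e * u s E) c x :=
      ((huac e c x).fun_mul (hvac E c x)).fun_sub ((hvac e c x).fun_mul (huac E c x))
    have h1 := acoi_ftc (f' := fun t => (e - E) * (u t e * u t E)) hac (by
      filter_upwards [hvd e, hvd E] with t h1 h2
      convert! ((hu e t).mul h2).sub (h1.mul (hu E t)) using 1
      ring)
    rw [intervalIntegral.integral_const_mul] at h1
    rw [h1, hu0, hu0, hv0, hv0]
    ring
  intro x E
  have hsin : ∀ e, Real.sin (φ x e - φ x E) =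
      (e - E) * ((R x e * R x E)⁻¹ * ∫ t in c..x, u t e * u t E) := by
    intro e
    have h1 := hwr x e E
    rw [huR x e, huR x E, hvR x e, hvR x E] at h1
    have h2 := (hR x e).ne'
    have h3 := (hR x E).ne'
    rw [Real.sin_sub, mul_left_comm, ← h1]
    field_simp
  have hds : HasDerivAt (fun e => Real.sin (φ x e - φ x E))
      ((R x E ^ 2)⁻¹ * ∫ t in c..x, u t E ^ 2) E := by
    rw [hasDerivAt_iff_tendsto_slope]
    have hc1 : ContinuousAt
        (fun e => (R x e * R x E)⁻¹ * ∫ t in c..x, u t e * u t E) E :=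
      (((hRc x E).mul continuousAt_const).inv₀
        (mul_pos (hR x E) (hR x E)).ne').mul (hint x E)
    have hc2 := hc1.tendsto.mono_left (nhdsWithin_le_nhds (s := {E}ᶜ))
    have hv' : (R x E ^ 2)⁻¹ * ∫ t in c..x, u t E ^ 2 =
        (R x E * R x E)⁻¹ * ∫ t in c..x, u t E * u t E := by
      simp only [pow_two]
    rw [hv']
    refine hc2.congr' ?_
    filter_upwards [self_mem_nhdsWithin] with e he
    have he' : e - E ≠ 0 := sub_ne_zero.2 he
    rw [slope_def_field, hsin e, sub_self, Real.sin_zero, sub_zero]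
    field_simp
  have hda : HasDerivAt (fun e => Real.arcsin (Real.sin (φ x e - φ x E)))
      ((R x E ^ 2)⁻¹ * ∫ t in c..x, u t E ^ 2) E := by
    have h1 : HasDerivAt Real.arcsin 1 (Real.sin (φ x E - φ x E)) := by
      have := Real.hasDerivAt_arcsin (x := Real.sin (φ x E - φ x E)) (by simp) (by simp)
      simpa using this
    have h2 := HasDerivAt.comp E h1 hds
    rw [one_mul] at h2
    exact h2
  have hfin := hda.add_const (φ x E)
  refine hfin.congr_of_eventuallyEq ?_
  have hcφ : ContinuousAt (fun e => φ x e - φ x E) E :=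
    ((φc2 x).sub continuous_const).continuousAt
  have hmem : Set.Icc (-(Real.pi / 2)) (Real.pi / 2) ∈ nhds (φ x E - φ x E) := by
    have := Real.pi_pos
    apply Icc_mem_nhds <;> linarith
  filter_upwards [hcφ.preimage_mem_nhds hmem] with e he
  have he' : φ x e - φ x E ∈ Set.Icc (-(Real.pi / 2)) (Real.pi / 2) := he
  rw [Real.arcsin_sin he'.1 he'.2]
  ring
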